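/- Fix γ ∈ (0,1/2). Let N be a large integer, R = N^γ, w = log log log N, W = ∏_{p ≤ w} p, and W̄ = ∏_{p ≤ w} p^{ι(p)} where ι(p) is defined by p^{ι(p)−1} < (log N)^{C_1+1} ≤ p^{ι(p)} for a fixed constant C_1 > 1; assume W̄ < N^γ − 1. Let χ : ℝ → [0,1] be a smooth even function supported on [−1,1] with χ(0) = 1, and set Λ_{χ,R}(n) = log R·(Σ_{ℓ ∣ n} μ(ℓ)·χ(log ℓ / log R))². Let Λ' = 1_{𝒫∖[N^{2γ}]}·log (i.e. Λ'(n) = log n if n is a prime greater than N^{2γ} and 0 otherwise), and for b ∈ {1,…,W̄} set Λ'_{b,W̄}(n) = (φ(W)/W)·Λ'(W̄n + b) and ν_{GT,b}(n) = (φ(W)/W)·Λ_{χ,R}(W̄n + b). Then there is a constant c depending only on γ such that for every b ∈ {1,…,W̄} coprime to W and every n with 1 ≤ n ≤ N/W̄, one has Λ'_{b,W̄}(n) ≤ c·ν_{GT,b}(n). -/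

import Mathlib

open scoped Classical

/-- The primes p ≤ x (listed among the first N+1 integers). -/
noncomputable def primesBelowR (x : ℝ) (N : ℕ) : Finset ℕ :=
  (Finset.range (N + 1)).filter (fun p => p.Prime ∧ (p : ℝ) ≤ x)

/-- w(N) = log log log N. -/
noncomputable def tripleLog (N : ℕ) : ℝ := Real.log (Real.log (Real.log N))

/-- W = ∏_{p ≤ w(N)} p. -/
noncomputable def Wprod (N : ℕ) : ℕ := ∏ p ∈ primesBelowR (tripleLog N) N, p

/-- W̄ = ∏_{p ≤ w(N)} p^{ι(p)}. -/
noncomputable def WbarProd (N : ℕ) (ι : ℕ → ℕ) : ℕ :=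
  ∏ p ∈ primesBelowR (tripleLog N) N, p ^ ι p

/-- The Goldston–Yıldırım truncated divisor sum Λ_{χ,R}. -/
noncomputable def lambdaChi (χ : ℝ → ℝ) (R : ℝ) (m : ℕ) : ℝ :=
  Real.log R *
    (∑ ℓ ∈ m.divisors, (ArithmeticFunction.moebius ℓ : ℝ) * χ (Real.log ℓ / Real.log R)) ^ 2

/-- Λ' = 1_{𝒫 ∖ [N^{2γ}]}·log. -/
noncomputable def lambdaPrimeTrunc (γ : ℝ) (N : ℕ) (m : ℕ) : ℝ :=
  if m.Prime ∧ (N : ℝ) ^ (2 * γ) < (m : ℝ) then Real.log m else 0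

/-- the Goldston–Yıldırım majorant dominates the W̄-tricked
truncated von Mangoldt function. -/
theorem statement9 (γ : ℝ) (hγ0 : 0 < γ) (hγ : γ < 1 / 2) (C1 : ℝ) (hC1 : 1 < C1) :
    ∃ c : ℝ, 0 < c ∧
      ∀ N : ℕ, 2 ≤ N →
      ∀ ι : ℕ → ℕ,
        (∀ p ∈ primesBelowR (tripleLog N) N,
          (p : ℝ) ^ ((ι p : ℤ) - 1) < (Real.log N) ^ (C1 + 1) ∧
          (Real.log N) ^ (C1 + 1) ≤ (p : ℝ) ^ (ι p)) →
      ((WbarProd N ι : ℝ) < (N : ℝ) ^ γ - 1) →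
      ∀ χ : ℝ → ℝ, ContDiff ℝ (⊤ : ℕ∞) χ → (∀ x, χ (-x) = χ x) →
        (∀ x, 1 < |x| → χ x = 0) → (∀ x, 0 ≤ χ x ∧ χ x ≤ 1) → χ 0 = 1 →
      ∀ b : ℕ, 1 ≤ b → b ≤ WbarProd N ι → Nat.Coprime b (Wprod N) →
      ∀ n : ℕ, 1 ≤ n → (n : ℝ) ≤ (N : ℝ) / (WbarProd N ι : ℝ) →
        ((Wprod N).totient : ℝ) / (Wprod N : ℝ) *
            lambdaPrimeTrunc γ N (WbarProd N ι * n + b)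
          ≤ c * (((Wprod N).totient : ℝ) / (Wprod N : ℝ) *
              lambdaChi χ ((N : ℝ) ^ γ) (WbarProd N ι * n + b)) := by
  refine ⟨2 / γ, by positivity, ?_⟩
  intro N hN ι _ hW χ _ _ hsupp _ hχ0 b hb1 hbW _ n hn1 hn
  generalize WbarProd N ι = V at *
  have hNR : (2 : ℝ) ≤ N := by exact_mod_cast hN
  have hN0 : (0 : ℝ) < N := by linarith
  have hlogN : 0 < Real.log N := Real.log_pos (by linarith)
  have hV0 : (0 : ℝ) < V := by
    have : 0 < V := by omega
    exact_mod_cast this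
  have hlogR : Real.log ((N : ℝ) ^ γ) = γ * Real.log N := Real.log_rpow hN0 γ
  have key : lambdaPrimeTrunc γ N (V * n + b) ≤
      2 / γ * lambdaChi χ ((N : ℝ) ^ γ) (V * n + b) := by
    unfold lambdaPrimeTrunc lambdaChi
    rw [hlogR]
    split_ifs with h
    · obtain ⟨hp, hlt⟩ := h
      have hm : ((V * n + b : ℕ) : ℝ) ≤ (N : ℝ) ^ (2 : ℕ) := by
        have h1 : (n : ℝ) * V ≤ N := (le_div_iff₀ hV0).1 hn
        have h2 : (b : ℝ) ≤ V := by exact_mod_cast hbW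
        have h3 : (N : ℝ) ^ γ ≤ (N : ℝ) ^ (1 : ℝ) :=
          Real.rpow_le_rpow_of_exponent_le (by linarith) (by linarith)
        rw [Real.rpow_one] at h3
        push_cast
        nlinarith
      have hmpos : (0 : ℝ) < ((V * n + b : ℕ) : ℝ) := by exact_mod_cast hp.pos
      have hle : Real.log ((V * n + b : ℕ) : ℝ) ≤ 2 * Real.log N := by
        have := Real.log_le_log hmpos hm
        rw [Real.log_pow] at this
        exact_mod_cast this
      have hlow : 2 * γ * Real.log N < Real.log ((V * n + b : ℕ) : ℝ) := by
        have := Real.log_lt_log (Real.rpow_pos_of_pos hN0 _) hlt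
        rwa [Real.log_rpow hN0] at this
      have hgl : 0 < γ * Real.log N := by positivity
      have hz : χ (Real.log ((V * n + b : ℕ) : ℝ) / (γ * Real.log N)) = 0 := by
        apply hsupp
        refine lt_of_lt_of_le ?_ (le_abs_self _)
        rw [lt_div_iff₀ hgl]
        nlinarith
      rw [hp.divisors, Finset.sum_pair hp.one_lt.ne, hz]
      simp only [Nat.cast_one, Real.log_one, zero_div, hχ0, mul_zero, add_zero, mul_one,
        ArithmeticFunction.moebius_apply_one, Int.cast_one, one_pow]
      calc _ ≤ 2 * Real.log N := hle
        _ = _ := by field_simp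
    · positivity
  calc _ ≤ ((Wprod N).totient : ℝ) / (Wprod N : ℝ) *
        (2 / γ * lambdaChi χ ((N : ℝ) ^ γ) (V * n + b)) :=
        mul_le_mul_of_nonneg_left key (by positivity)
    _ = _ := by ring
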